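/- Let 0 → A → B → C → 0 be an almost pure short exact sequence of R-modules with B almost absolutely pure. Then A is almost absolutely pure. -/

import Mathlib

universe u

open CategoryTheory

/-- A module `E` is almost absolutely pure if `Ext¹ᴿ(N, E)` is almost zero for every
finitely presented module `N`. -/
def IsAlmostAbsolutelyPure {R : Type u} [CommRing R] (m : Ideal R)
    (E : Type u) [AddCommGroup E] [Module R E] : Prop :=
  ∀ (N : Type u) [AddCommGroup N] [Module R N], Module.FinitePresentation R N →
    ∀ s ∈ m, ∀ x : ((Ext R (ModuleCat.{u} R) 1).obj
        (Opposite.op (ModuleCat.of R N))).obj (ModuleCat.of R E),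
      s • x = 0

/-- A short exact sequence `0 → A →f B → C → 0` is almost pure if for every module `M`
the kernel of `M ⊗ A → M ⊗ B` is almost zero. -/
def IsAlmostPure {R : Type u} [CommRing R] (m : Ideal R)
    {A B : Type u} [AddCommGroup A] [Module R A] [AddCommGroup B] [Module R B]
    (f : A →ₗ[R] B) : Prop :=
  ∀ (M : Type u) [AddCommGroup M] [Module R M],
    ∀ s ∈ m, ∀ x ∈ LinearMap.ker (LinearMap.lTensor M f), s • x = 0

/-!
Let `N` be finitely presented, say `N = F ⧸ K` with `F` finite free and `K` finitely generated.
Then `Ext¹(N, E)` is the cokernel of the restriction map `Hom(F, E) → Hom(K, E)`, so an element of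
`R` annihilates it iff it makes every map `K → E` extendable to `F`.

Let `s, t ∈ m` and `h : K → A`. Since `B` is almost absolutely pure, `t • (f ∘ h)` extends to a map
`F → B`. Choosing a finite free cover of `K` and writing `Hom(P, -) = P* ⊗ -` for `P` finite free,
almost purity of `f`, applied to the cokernel of a map of dual modules, makes `s • t • h` extend to
a map `F → A`. So `m * m = m` annihilates `Ext¹(N, A)`.
-/

open Function (Exact Surjective)
open LinearMap TensorProduct

/-- The element `s` annihilates the cokernel of the restriction map `Hom(F, E) → Hom(K, E)`.
For `F` projective this cokernel is `Ext¹(F ⧸ K, E)`. -/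
def SMulExtends {R F : Type*} [CommRing R] [AddCommGroup F] [Module R F] (s : R)
    (K : Submodule R F) (E : Type*) [AddCommGroup E] [Module R E] : Prop :=
  ∀ h : K →ₗ[R] E, ∃ ψ : F →ₗ[R] E, ψ ∘ₗ K.subtype = s • h

namespace IsAlmostPure

variable {R : Type u} [CommRing R] {m : Ideal R} {A B : Type u} [AddCommGroup A] [Module R A]
  [AddCommGroup B] [Module R B] {f : A →ₗ[R] B} {s : R}

lemma smul_mem_range_rTensor (hf : IsAlmostPure m f) (hs : s ∈ m)
    {P : Type*} {Q : Type u} [AddCommGroup P] [Module R P] [AddCommGroup Q] [Module R Q]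
    (v : P →ₗ[R] Q) {w : Q ⊗[R] A} (hw : f.lTensor Q w ∈ range (v.rTensor B)) :
    s • w ∈ range (v.rTensor A) := by
  let c : Q →ₗ[R] Q ⧸ range v := (range v).mkQ
  have exact_rTensor (D : Type u) [AddCommGroup D] [Module R D] :
      Exact (v.rTensor D) (c.rTensor D) :=
    rTensor_exact D (exact_map_mkQ_range v) (Submodule.mkQ_surjective _)
  have image_mem_ker : c.rTensor A w ∈ ker (f.lTensor (Q ⧸ range v)) := by
    calc f.lTensor _ (c.rTensor A w) = c.rTensor B (f.lTensor Q w) :=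
          congr($((lTensor_comp_rTensor ..).trans (rTensor_comp_lTensor ..).symm) w)
      _ = 0 := (exact_rTensor B _).mpr hw
  refine (exact_rTensor A _).mp ?_
  rw [map_smul, hf _ s hs _ image_mem_ker]

lemma exists_comp_eq_smul (hf : IsAlmostPure m f) (hs : s ∈ m)
    {L : Type u} {F : Type*} [AddCommGroup L] [Module R L] [Module.Finite R L]
    [Module.Projective R L] [AddCommGroup F] [Module R F] [Module.Finite R F]
    [Module.Projective R F] {k : L →ₗ[R] F} {φ : L →ₗ[R] A} {ψ : F →ₗ[R] B}
    (h : f ∘ₗ φ = ψ ∘ₗ k) :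
    ∃ θ : F →ₗ[R] A, θ ∘ₗ k = s • φ := by
  obtain ⟨w, rfl⟩ := (dualTensorHom_bijective (M := L) (N := A)).surjective φ
  obtain ⟨y, rfl⟩ := (dualTensorHom_bijective (M := F) (N := B)).surjective ψ
  have lTensor_w : f.lTensor _ w = k.dualMap.rTensor B y := by
    refine dualTensorHom_bijective.injective ?_
    calc dualTensorHom R L B (f.lTensor _ w) = f ∘ₗ dualTensorHom R L A w :=
          congr($(dualTensorHom_comp_lTensor f) w)
      _ = dualTensorHom R F B y ∘ₗ k := h
      _ = dualTensorHom R L B (k.dualMap.rTensor B y) :=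
          congr($(dualTensorHom_comp_rTensor_dualMap k) y).symm
  obtain ⟨z, hz⟩ := hf.smul_mem_range_rTensor hs k.dualMap ⟨y, lTensor_w.symm⟩
  refine ⟨dualTensorHom R F A z, ?_⟩
  calc dualTensorHom R F A z ∘ₗ k = dualTensorHom R L A (k.dualMap.rTensor A z) :=
        congr($(dualTensorHom_comp_rTensor_dualMap k) z).symm
    _ = s • dualTensorHom R L A w := by rw [hz, map_smul]

lemma smulExtends_mul {t : R} (hf : IsAlmostPure m f) (hs : s ∈ m)
    {F : Type*} [AddCommGroup F] [Module R F] [Module.Finite R F] [Module.Projective R F]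
    {K : Submodule R F} (hK : K.FG) (hB : SMulExtends t K B) : SMulExtends (s * t) K A := by
  intro h
  obtain ⟨ψ, hψ⟩ := hB (f ∘ₗ h)
  have : Module.Finite R K := Module.Finite.iff_fg.mpr hK
  obtain ⟨n, π, hπ⟩ := Module.Finite.exists_fin' R K
  have factorization : f ∘ₗ (t • h ∘ₗ π) = ψ ∘ₗ (K.subtype ∘ₗ π) := by
    rw [← comp_assoc, hψ, comp_smul, smul_comp, comp_assoc]
  obtain ⟨θ, hθ⟩ := hf.exists_comp_eq_smul hs factorization
  refine ⟨θ, (cancel_right hπ).mp ?_⟩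
  rw [comp_assoc, hθ, smul_comp, mul_smul]

end IsAlmostPure

section SMulExtends

variable {R F F' N E : Type*} [CommRing R] [AddCommGroup F] [Module R F] [AddCommGroup F']
  [Module R F'] [AddCommGroup N] [Module R N] [AddCommGroup E] [Module R E] {s : R}

lemma SMulExtends.ker_of_ker [Module.Projective R F] [Module.Projective R F']
    {p : F →ₗ[R] N} {p' : F' →ₗ[R] N} (hp : Surjective p) (hp' : Surjective p')
    (H : SMulExtends s (ker p') E) : SMulExtends s (ker p) E := by
  intro h
  obtain ⟨α, hα⟩ := Module.projective_lifting_property p p' hp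
  obtain ⟨β, hβ⟩ := Module.projective_lifting_property p' p hp'
  have p_α (x : F') : p (α x) = p' x := congr($hα x)
  have p'_β (x : F) : p' (β x) = p x := congr($hβ x)
  let αKer : ker p' →ₗ[R] ker p := α.restrict fun x hx ↦ by rwa [mem_ker, p_α]
  let δ : F →ₗ[R] ker p := (LinearMap.id - α ∘ₗ β).codRestrict _ fun x ↦ by simp [p_α, p'_β]
  obtain ⟨ψ, hψ⟩ := H (h ∘ₗ αKer)
  refine ⟨ψ ∘ₗ β + s • (h ∘ₗ δ), LinearMap.ext fun k ↦ ?_⟩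
  have β_mem : β k ∈ ker p' := by rw [mem_ker, p'_β, k.2]
  have decomposition : αKer ⟨β k, β_mem⟩ + δ k = k := Subtype.ext (by simp [αKer, δ])
  calc ψ (β k) + s • h (δ k) = s • h (αKer ⟨β k, β_mem⟩) + s • h (δ k) := by
        rw [show ψ (β k) = _ from congr($hψ ⟨β k, β_mem⟩)]; rfl
    _ = s • h k := by rw [← smul_add, ← map_add, decomposition]

lemma smulExtends_ker_iff_of_exact {P₂ P₁ P₀ : Type*} [AddCommGroup P₂] [Module R P₂]
    [AddCommGroup P₁] [Module R P₁] [AddCommGroup P₀] [Module R P₀]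
    {d₂ : P₂ →ₗ[R] P₁} {d₁ : P₁ →ₗ[R] P₀} {p : P₀ →ₗ[R] N}
    (hd : Exact d₂ d₁) (hp : Exact d₁ p) :
    SMulExtends s (ker p) E ↔
      ∀ φ : P₁ →ₗ[R] E, φ ∘ₗ d₂ = 0 → ∃ ψ : P₀ →ₗ[R] E, ψ ∘ₗ d₁ = s • φ := by
  let d : P₁ →ₗ[R] ker p := d₁.codRestrict _ hp.apply_apply_eq_zero
  have d_surjective : Surjective d := fun ⟨x, hx⟩ ↦
    ((hp x).mp hx).imp fun _ ↦ Subtype.ext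
  have exact_d : Exact d₂ d := fun x ↦ Subtype.ext_iff.trans (hd x)
  constructor
  · intro H φ hφ
    obtain ⟨h, rfl⟩ := (exact_lcomp_of_exact_of_surjective E exact_d d_surjective φ).mp hφ
    exact (H h).imp fun ψ hψ ↦ congrArg (· ∘ₗ d) hψ
  · intro H h
    obtain ⟨ψ, hψ⟩ := H (h ∘ₗ d) (by rw [comp_assoc, exact_d.linearMap_comp_eq_zero, comp_zero])
    exact ⟨ψ, (cancel_right d_surjective).mp hψ⟩

end SMulExtends

lemma mem_annihilator_homology_iff {R : Type*} [Ring R] (S : ShortComplex (ModuleCat R)) {s : R} :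
    s ∈ Module.annihilator R S.homology ↔ ∀ x, S.g x = 0 → ∃ y, S.f y = s • x := by
  rw [S.moduleCatHomologyIso.toLinearEquiv.annihilator_eq]
  refine (SetLike.ext_iff.mp Submodule.annihilator_quotient s).trans ?_
  simp only [Submodule.mem_colon, Set.mem_univ, true_imp_iff, Subtype.forall, mem_range, mem_ker,
    Subtype.ext_iff]
  rfl

section Ext

variable {R : Type u} [CommRing R]

lemma mem_annihilator_ext_one_iff_of_resolution {X Y : ModuleCat.{u} R}
    (P : ProjectiveResolution X) {s : R} :
    s ∈ Module.annihilator R (((Ext R (ModuleCat.{u} R) 1).obj (Opposite.op X)).obj Y) ↔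
      ∀ φ : P.complex.X 1 →ₗ[R] Y, φ ∘ₗ (P.complex.d 2 1).hom = 0 →
        ∃ ψ : P.complex.X 0 →ₗ[R] Y, ψ ∘ₗ (P.complex.d 1 0).hom = s • φ := by
  let homologyIso := ShortComplex.homologyMapIso
    ((P.complex.linearYonedaObj R Y).isoSc' 0 1 2 (by simp) (by simp))
  rw [(P.isoExt 1 Y ≪≫ homologyIso).toLinearEquiv.annihilator_eq, mem_annihilator_homology_iff]
  refine ModuleCat.homEquiv.forall_congr fun φ ↦ imp_congr ModuleCat.hom_ext_iff ?_
  exact ModuleCat.homEquiv.exists_congr fun ψ ↦ ModuleCat.hom_ext_iff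

lemma mem_annihilator_ext_one_iff_smulExtends {F N E : Type u} [AddCommGroup F] [Module R F]
    [Module.Projective R F] [AddCommGroup N] [Module R N] [AddCommGroup E] [Module R E]
    {p : F →ₗ[R] N} (hp : Surjective p) {s : R} :
    s ∈ Module.annihilator R (((Ext R (ModuleCat.{u} R) 1).obj
        (Opposite.op (ModuleCat.of R N))).obj (ModuleCat.of R E)) ↔
      SMulExtends s (ker p) E := by
  let P := projectiveResolution (ModuleCat.of R N)
  let q : P.complex.X 0 →ₗ[R] N := (P.π.f 0).hom
  have projective_P₀ : Module.Projective R (P.complex.X 0) :=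
    (IsProjective.iff_projective _).mpr (P.projective 0)
  have q_surjective : Surjective q :=
    (ModuleCat.epi_iff_surjective _).mp (Limits.epi_of_isColimit_cofork P.isColimitCokernelCofork)
  have exact_d : Exact (P.complex.d 2 1).hom (P.complex.d 1 0).hom :=
    (ShortComplex.ShortExact.moduleCat_exact_iff_function_exact _).mp (P.exact_succ 0)
  have exact_q : Exact (P.complex.d 1 0).hom q :=
    (ShortComplex.ShortExact.moduleCat_exact_iff_function_exact _).mp P.exact₀
  rw [mem_annihilator_ext_one_iff_of_resolution P, ← smulExtends_ker_iff_of_exact exact_d exact_q]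
  exact ⟨.ker_of_ker hp q_surjective, .ker_of_ker q_surjective hp⟩

end Ext

lemma isAlmostAbsolutelyPure_iff_le_annihilator {R : Type u} [CommRing R] {m : Ideal R}
    {E : Type u} [AddCommGroup E] [Module R E] :
    IsAlmostAbsolutelyPure m E ↔
      ∀ (N : Type u) [AddCommGroup N] [Module R N], Module.FinitePresentation R N →
        m ≤ Module.annihilator R (((Ext R (ModuleCat.{u} R) 1).obj
          (Opposite.op (ModuleCat.of R N))).obj (ModuleCat.of R E)) := by
  simp only [IsAlmostAbsolutelyPure, SetLike.le_def, Module.mem_annihilator]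

theorem almostAbsolutelyPure_of_almostPure_submodule_general
    {R : Type u} [CommRing R] (m : Ideal R) (hm : m * m = m)
    {A B : Type u} [AddCommGroup A] [Module R A] [AddCommGroup B] [Module R B]
    (f : A →ₗ[R] B) (hpure : IsAlmostPure m f) (hB : IsAlmostAbsolutelyPure m B) :
    IsAlmostAbsolutelyPure m A := by
  rw [isAlmostAbsolutelyPure_iff_le_annihilator] at hB ⊢
  intro N _ _ hN
  obtain ⟨n, p, hp⟩ := Module.Finite.exists_fin' R N
  have ker_fg : (ker p).FG := Module.FinitePresentation.fg_ker p hp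
  rw [← hm, Ideal.mul_le]
  intro s hs t ht
  have extends_B : SMulExtends t (ker p) B :=
    (mem_annihilator_ext_one_iff_smulExtends hp).mp (hB N hN ht)
  exact (mem_annihilator_ext_one_iff_smulExtends hp).mpr
    (hpure.smulExtends_mul hs ker_fg extends_B)

/-- An almost pure submodule of an almost absolutely pure module is
almost absolutely pure. -/
theorem almostAbsolutelyPure_of_almostPure_submodule
    {R : Type u} [CommRing R] (m : Ideal R) (hm : m * m = m)
    {A B C : Type u} [AddCommGroup A] [Module R A] [AddCommGroup B] [Module R B]
    [AddCommGroup C] [Module R C]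
    (f : A →ₗ[R] B) (g : B →ₗ[R] C)
    (hf : Function.Injective f) (hg : Function.Surjective g)
    (hfg : LinearMap.range f = LinearMap.ker g)
    (hpure : IsAlmostPure m f) (hB : IsAlmostAbsolutelyPure m B) :
    IsAlmostAbsolutelyPure m A :=
  almostAbsolutelyPure_of_almostPure_submodule_general m hm f hpure hB
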